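/- arXiv:2512.00779 — 6 statements merged into one kernel-verified Lean document; each statement's English description precedes it below -/
import Mathlib

section
/- Let γ > 0. There exists a constant c(γ) > 0, depending only on γ, such that for every integer n ≥ 2 with γ·ln n < n and every vector a ∈ ℝ^{4n} the following holds: if ξ is a random vector distributed according to the uniform probability measure on the Euclidean unit sphere S^{4n−1} ⊂ ℝ^{4n}, then Prob{ ⟨a, ξ⟩ ≥ √(γ·ln n / n) · ‖a‖ } ≥ c(γ) / ( n^{4.5γ} · √(ln n) ). -/
open MeasureTheory
open scoped RealInnerProductSpace

open ProbabilityTheory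

section Invariance

variable {E : Type*} [NormedAddCommGroup E] [InnerProductSpace ℝ E] [MeasurableSpace E]
  [BorelSpace E]

/-- Under a rotation-invariant measure, the mass of a half-space depends only on the norm of its
normal vector. -/
lemma measure_halfspace_eq_of_norm_eq [CompleteSpace E] {μ : Measure E}
    (hμ : ∀ T : E ≃ₗᵢ[ℝ] E, μ.map (fun x => T x) = μ) {a b : E} (hab : ‖a‖ = ‖b‖) (r : ℝ) :
    μ {x | r ≤ ⟪a, x⟫} = μ {x | r ≤ ⟪b, x⟫} := by
  set T : E ≃ₗᵢ[ℝ] E := Submodule.reflection (ℝ ∙ (a - b))ᗮ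
  have hT : T a = b := Submodule.reflection_sub hab
  conv_rhs => rw [← hμ T]
  rw [Measure.map_apply T.continuous.measurable
    (measurableSet_le measurable_const (by fun_prop))]
  simp only [Set.preimage_ofPred_eq, ← hT, LinearIsometryEquiv.inner_map_map]

/-- Under a rotation-invariant measure, the mass of a circular cone `{x | t‖a‖ ≤ ⟪a, x⟫}` does not
depend on its axis `a ≠ 0`. -/
lemma measure_cap_eq_of_ne_zero [CompleteSpace E] {μ : Measure E}
    (hμ : ∀ T : E ≃ₗᵢ[ℝ] E, μ.map (fun x => T x) = μ) {a b : E} (ha : a ≠ 0) (hb : b ≠ 0)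
    (t : ℝ) : μ {x | t * ‖a‖ ≤ ⟪a, x⟫} = μ {x | t * ‖b‖ ≤ ⟪b, x⟫} := by
  have key : ∀ v : E, v ≠ 0 →
      {x : E | t * ‖v‖ ≤ ⟪v, x⟫} = {x | t ≤ ⟪(‖v‖⁻¹ : ℝ) • v, x⟫} := by
    intro v hv
    ext x
    have : 0 < ‖v‖ := norm_pos_iff.2 hv
    simp only [Set.mem_ofPred_eq, real_inner_smul_left]
    rw [inv_mul_eq_div, le_div_iff₀ this]
  rw [key a ha, key b hb]
  refine measure_halfspace_eq_of_norm_eq hμ ?_ t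
  simp [norm_smul, ha, hb]

/-- Double averaging: the `μ`-mass of a spherical cap is at least the mass of the corresponding cone
under any rotation-invariant probability measure `ν`. -/
lemma measure_cone_le_measure_cap [FiniteDimensional ℝ E] {μ ν : Measure E}
    [IsProbabilityMeasure μ] [IsProbabilityMeasure ν] (hsph : μ (Metric.sphere 0 1) = 1)
    (hμ : ∀ T : E ≃ₗᵢ[ℝ] E, μ.map (fun x => T x) = μ)
    (hν : ∀ T : E ≃ₗᵢ[ℝ] E, ν.map (fun x => T x) = ν) {a e : E} (ha : a ≠ 0) (he : ‖e‖ = 1)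
    (t : ℝ) :
    ν {g | g ≠ 0 ∧ t * ‖g‖ ≤ ⟪e, g⟫} ≤ μ {x | t * ‖a‖ ≤ ⟪a, x⟫} := by
  have : CompleteSpace E := FiniteDimensional.complete ℝ E
  have : ProperSpace E := FiniteDimensional.proper ℝ E
  set S : Set (E × E) := {p | p.1 ≠ 0 ∧ t * ‖p.1‖ ≤ ⟪p.1, p.2⟫} with hS
  have hSm : MeasurableSet S := by
    refine MeasurableSet.inter ?_ ?_
    · exact (measurableSet_singleton (0 : E)).compl.preimage measurable_fst
    · exact measurableSet_le (f := fun p : E × E => t * ‖p.1‖) (g := fun p => ⟪p.1, p.2⟫)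
        (by fun_prop) (by fun_prop)
  have hae : ∀ᵐ x ∂μ, x ∈ Metric.sphere (0 : E) 1 :=
    (prob_compl_eq_zero_iff Metric.isClosed_sphere.measurableSet).2 hsph
  calc ν {g | g ≠ 0 ∧ t * ‖g‖ ≤ ⟪e, g⟫}
      = ∫⁻ _x, ν {g | g ≠ 0 ∧ t * ‖g‖ ≤ ⟪e, g⟫} ∂μ := by simp
    _ = ∫⁻ x, ν ((fun g => (g, x)) ⁻¹' S) ∂μ := by
      refine lintegral_congr_ae ?_
      filter_upwards [hae] with x hx
      have hxe : ‖e‖ = ‖x‖ := by simpa [he] using (mem_sphere_zero_iff_norm.1 hx).symm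
      set T : E ≃ₗᵢ[ℝ] E := Submodule.reflection (ℝ ∙ (e - x))ᗮ
      have hT : T e = x := Submodule.reflection_sub hxe
      conv_rhs => rw [← hν T]
      rw [Measure.map_apply T.continuous.measurable (hSm.preimage (by fun_prop))]
      congr 1
      ext g
      simp [hS, ← hT, real_inner_comm]
    _ = (ν.prod μ) S := (Measure.prod_apply_symm hSm).symm
    _ = ∫⁻ g, μ (Prod.mk g ⁻¹' S) ∂ν := Measure.prod_apply hSm
    _ ≤ ∫⁻ _g, μ {x | t * ‖a‖ ≤ ⟪a, x⟫} ∂ν := by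
      refine lintegral_mono fun g => ?_
      by_cases hg : g = 0
      · simp [hS, hg]
      · rw [measure_cap_eq_of_ne_zero hμ ha hg]
        exact measure_mono fun x hx => hx.2
    _ = μ {x | t * ‖a‖ ≤ ⟪a, x⟫} := by simp

end Invariance

section Gaussian

variable {ι : Type*} [Fintype ι]

/-- The mean square of a coordinate of a standard Gaussian vector is `1`. -/
lemma lintegral_sq_eval_pi_gaussianReal (j : ι) :
    ∫⁻ x : ι → ℝ, ENNReal.ofReal (x j ^ 2) ∂Measure.pi (fun _ => gaussianReal 0 1) = 1 := by
  rw [(measurePreserving_eval (fun _ : ι => gaussianReal 0 1) j).lintegral_comp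
    (f := fun y : ℝ => ENNReal.ofReal (y ^ 2)) (by fun_prop)]
  have hint : Integrable (fun y : ℝ => y ^ 2) (gaussianReal 0 1) :=
    (memLp_id_gaussianReal' 2 (by simp)).integrable_sq
  rw [← ofReal_integral_eq_lintegral_ofReal hint (ae_of_all _ fun y => sq_nonneg y)]
  have h := variance_fun_id_gaussianReal (μ := 0) (v := 1)
  rw [variance_of_integral_eq_zero (by fun_prop) (by simp)] at h
  simp [h]

/-- Markov's inequality for the squared norm of a partial Gaussian vector. -/
lemma half_le_pi_gaussianReal_sum_sq_le [Nonempty ι] (s : Finset ι) :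
    (1 / 2 : ENNReal) ≤ Measure.pi (fun _ : ι => gaussianReal 0 1)
      {x | ∑ j ∈ s, x j ^ 2 ≤ 2 * Fintype.card ι} := by
  set P := Measure.pi (fun _ : ι => gaussianReal 0 1)
  set B : Set (ι → ℝ) := {x | ∑ j ∈ s, x j ^ 2 ≤ 2 * Fintype.card ι}
  have hBm : MeasurableSet B := measurableSet_le (by fun_prop) measurable_const
  have hlint : ∫⁻ x, ENNReal.ofReal (∑ j ∈ s, x j ^ 2) ∂P ≤ Fintype.card ι := by
    calc ∫⁻ x, ENNReal.ofReal (∑ j ∈ s, x j ^ 2) ∂P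
        = ∑ j ∈ s, ∫⁻ x, ENNReal.ofReal (x j ^ 2) ∂P := by
          rw [← lintegral_finsetSum _ (fun j _ => by fun_prop)]
          simp_rw [ENNReal.ofReal_sum_of_nonneg (fun j _ => sq_nonneg _)]
      _ = s.card := by simp [P, lintegral_sq_eval_pi_gaussianReal]
      _ ≤ Fintype.card ι := by exact_mod_cast s.card_le_univ
  have hcompl : P Bᶜ ≤ 1 / 2 := by
    calc P Bᶜ ≤ P {x | ENNReal.ofReal (2 * Fintype.card ι) ≤
          ENNReal.ofReal (∑ j ∈ s, x j ^ 2)} :=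
          measure_mono fun x hx => ENNReal.ofReal_le_ofReal (le_of_lt (not_le.1 hx))
      _ ≤ (∫⁻ x, ENNReal.ofReal (∑ j ∈ s, x j ^ 2) ∂P) / ENNReal.ofReal (2 * Fintype.card ι) :=
          meas_ge_le_lintegral_div (Measurable.aemeasurable (by fun_prop)) (by simp) ENNReal.ofReal_ne_top
      _ ≤ 1 / 2 := by
          refine ENNReal.div_le_of_le_mul (hlint.trans_eq ?_)
          rw [ENNReal.ofReal_mul zero_le_two, ENNReal.ofReal_natCast, ENNReal.ofReal_ofNat,
            ← mul_assoc, ENNReal.div_mul_cancel two_ne_zero ENNReal.ofNat_ne_top, one_mul]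
  calc (1 / 2 : ENNReal) = 1 - 1 / 2 := by rw [one_div, ENNReal.one_sub_inv_two]
    _ ≤ 1 - P Bᶜ := tsub_le_tsub_left hcompl 1
    _ = P B := by rw [← prob_compl_eq_one_sub hBm.compl, compl_compl]

/-- Lower bound for the Gaussian mass of a circular cone around a coordinate axis. -/
lemma gaussianReal_Ici_div_two_le_stdGaussian_cone [DecidableEq ι] (i : ι) {s t : ℝ} (hs : 0 < s)
    (ht : 0 ≤ t) (ht1 : t ≤ 1) (hst : t ^ 2 * (2 * Fintype.card ι) ≤ s ^ 2 * (1 - t ^ 2)) :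
    gaussianReal 0 1 (Set.Ici s) / 2 ≤ stdGaussian (EuclideanSpace ℝ ι)
      {g | g ≠ 0 ∧ t * ‖g‖ ≤ ⟪EuclideanSpace.single i (1 : ℝ), g⟫} := by
  have : Nonempty ι := ⟨i⟩
  set P := Measure.pi (fun _ : ι => gaussianReal 0 1)
  set A : Set (ι → ℝ) := {x | s ≤ x i}
  set B : Set (ι → ℝ) :=
    {x | ∑ j ∈ Finset.univ.erase i, x j ^ 2 ≤ 2 * Fintype.card ι}
  have hPA : P A = gaussianReal 0 1 (Set.Ici s) :=
    (measurePreserving_eval (fun _ : ι => gaussianReal 0 1) i).measure_preimage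
      measurableSet_Ici.nullMeasurableSet
  have hindep : IndepFun (fun x : ι → ℝ => x i)
      (fun x => ∑ j ∈ Finset.univ.erase i, x j ^ 2) P := by
    have h := (iIndepFun_pi (μ := fun _ : ι => gaussianReal 0 1) (X := fun _ => id)
      (fun _ => aemeasurable_id)).indepFun_finset {i} (Finset.univ.erase i) (by simp)
      (fun j => by fun_prop)
    have hfst : Measurable fun y : ({i} : Finset ι) → ℝ => y ⟨i, by simp⟩ :=
      measurable_pi_apply _
    have hsnd : Measurable fun y : ((Finset.univ.erase i : Finset ι) : Type _) → ℝ =>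
        ∑ j, y j ^ 2 := by fun_prop
    have h2 := h.comp hfst hsnd
    convert h2 using 1
    · rfl
    · ext x
      exact (Finset.sum_coe_sort (Finset.univ.erase i) fun j => x j ^ 2).symm
  have hAB : P (A ∩ B) = P A * P B :=
    hindep.measure_inter_preimage_eq_mul (Set.Ici s) (Set.Iic (2 * Fintype.card ι))
      measurableSet_Ici measurableSet_Iic
  rw [← map_pi_eq_stdGaussian, Measure.map_apply (by fun_prop)]
  · calc gaussianReal 0 1 (Set.Ici s) / 2 = P A * (1 / 2) := by
          rw [hPA, one_div, div_eq_mul_inv]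
      _ ≤ P A * P B := by gcongr; exact half_le_pi_gaussianReal_sum_sq_le _
      _ = P (A ∩ B) := hAB.symm
      _ ≤ _ := by
        refine measure_mono fun x hx => ?_
        have hxA : s ≤ x i := hx.1
        have hxB : ∑ j ∈ Finset.univ.erase i, x j ^ 2 ≤ 2 * Fintype.card ι := hx.2
        refine ⟨fun h => ?_, ?_⟩
        · have : x i = 0 := by simpa using congrArg (fun g : EuclideanSpace ℝ ι => g i) h
          linarith
        · have hnorm : ‖WithLp.toLp 2 x‖ ^ 2 =
              x i ^ 2 + ∑ j ∈ Finset.univ.erase i, x j ^ 2 := by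
            rw [EuclideanSpace.real_norm_sq_eq,
              Finset.add_sum_erase _ (fun j => x j ^ 2) (Finset.mem_univ i)]
          have hinner : ⟪EuclideanSpace.single i (1 : ℝ), WithLp.toLp 2 x⟫ = x i := by
            simp [EuclideanSpace.inner_single_left]
          rw [hinner]
          refine le_of_sq_le_sq ?_ (by linarith)
          rw [mul_pow, hnorm]
          have h1 : s ^ 2 ≤ x i ^ 2 := by gcongr
          have h2 : t ^ 2 ≤ 1 := by nlinarith
          nlinarith [mul_le_mul_of_nonneg_left hxB (sq_nonneg t),
            mul_le_mul_of_nonneg_right h1 (sub_nonneg.2 h2)]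
  · refine MeasurableSet.inter ?_ ?_
    · exact (measurableSet_singleton _).compl
    · exact measurableSet_le (f := fun g : EuclideanSpace ℝ ι => t * ‖g‖)
        (g := fun g => ⟪EuclideanSpace.single i (1 : ℝ), g⟫) (by fun_prop) (by fun_prop)

/-- An explicit lower bound for the Gaussian tail. -/
lemma exp_div_le_gaussianReal_Ici {s : ℝ} (hs : 0 ≤ s) :
    ENNReal.ofReal ((√(2 * Real.pi))⁻¹ * Real.exp (-3 / 2) * Real.exp (-s ^ 2 / 2) / (s + 1)) ≤
      gaussianReal 0 1 (Set.Ici s) := by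
  set δ : ℝ := 1 / (s + 1) with hδ
  have hδ0 : 0 < δ := by positivity
  have hδ1 : δ ≤ 1 := by rw [hδ, div_le_one (by linarith)]; linarith
  have hsδ : s * δ ≤ 1 := by rw [hδ, mul_one_div, div_le_one (by linarith)]; linarith
  calc _ = ENNReal.ofReal ((√(2 * Real.pi))⁻¹ * Real.exp (-3 / 2 + -s ^ 2 / 2)) *
        volume (Set.Icc s (s + δ)) := by
        rw [Real.volume_Icc, ← ENNReal.ofReal_mul (by positivity), Real.exp_add]
        congr 1
        rw [hδ]
        ring
    _ = ∫⁻ _ in Set.Icc s (s + δ),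
        ENNReal.ofReal ((√(2 * Real.pi))⁻¹ * Real.exp (-3 / 2 + -s ^ 2 / 2)) := by simp
    _ ≤ ∫⁻ x in Set.Icc s (s + δ), gaussianPDF 0 1 x := by
      refine setLIntegral_mono' measurableSet_Icc fun x hx => ?_
      rw [gaussianPDF, gaussianPDFReal]
      refine ENNReal.ofReal_le_ofReal ?_
      simp only [NNReal.coe_one, mul_one, sub_zero]
      gcongr
      have h2 : x ^ 2 ≤ (s + δ) ^ 2 := by
        have := hx.1
        have := hx.2
        gcongr
        linarith
      nlinarith
    _ = gaussianReal 0 1 (Set.Icc s (s + δ)) := (gaussianReal_apply 0 one_ne_zero _).symm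
    _ ≤ gaussianReal 0 1 (Set.Ici s) := measure_mono Set.Icc_subset_Ici_self

end Gaussian

/-- A downward closed property of positive constants that holds for each index, and with a single
constant for all large indices, holds with a single constant for all indices. -/
lemma exists_pos_forall_of_eventually {Q : ℝ → ℕ → Prop}
    (hanti : ∀ c c' n, c' ≤ c → Q c n → Q c' n) (hpt : ∀ n, ∃ c, 0 < c ∧ Q c n) {c₀ : ℝ}
    (hc₀ : 0 < c₀) (hev : ∀ᶠ n in Filter.atTop, Q c₀ n) : ∃ c, 0 < c ∧ ∀ n, Q c n := by
  obtain ⟨N, hN⟩ := Filter.eventually_atTop.1 hev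
  choose f hf hQ using hpt
  obtain ⟨m, hm, hmin⟩ : ∃ m : ℝ, 0 < m ∧ ∀ n < N, m ≤ f n := by
    clear hN hev
    induction N with
    | zero => exact ⟨1, one_pos, by simp⟩
    | succ N ih =>
      obtain ⟨m, hm, hmin⟩ := ih
      refine ⟨min m (f N), lt_min hm (hf N), fun n hn => ?_⟩
      rcases Nat.lt_succ_iff_lt_or_eq.1 hn with h | rfl
      · exact (min_le_left _ _).trans (hmin n h)
      · exact min_le_right _ _
  refine ⟨min m c₀, lt_min hm hc₀, fun n => ?_⟩
  rcases lt_or_ge n N with h | h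
  · exact hanti _ _ n ((min_le_left _ _).trans (hmin n h)) (hQ n)
  · exact hanti _ _ n (min_le_right _ _) (hN n h)

lemma half_le_sqrt_log {n : ℕ} (hn : 2 ≤ n) : (1 / 2 : ℝ) ≤ √(Real.log n) := by
  refine Real.le_sqrt_of_sq_le ?_
  have : Real.log 2 ≤ Real.log n := Real.log_le_log two_pos (by exact_mod_cast hn)
  linarith [Real.log_two_gt_d9]

/-- With `t² = γ ln n / n`, there are thresholds `s` satisfying `8nt² ≤ s²(1 - t²)` whose Gaussian
tail is at least a constant times `n^{-4.5γ} / √(ln n)`. -/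
lemma exists_gaussian_threshold {γ : ℝ} (hγ : 0 < γ) :
    ∃ c : ℝ, 0 < c ∧ ∀ n : ℕ, 2 ≤ n → γ * Real.log n < n →
      ∃ s : ℝ, 0 < s ∧
        γ * Real.log n / n * (8 * n) ≤ s ^ 2 * (1 - γ * Real.log n / n) ∧
        ENNReal.ofReal (c / ((n : ℝ) ^ (4.5 * γ) * √(Real.log n))) ≤
          gaussianReal 0 1 (Set.Ici s) / 2 := by
  have hb : ∀ n : ℕ, 2 ≤ n → 0 < (n : ℝ) ^ (4.5 * γ) * √(Real.log n) := by
    intro n hn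
    have h1 : (1 : ℝ) < n := by exact_mod_cast hn
    have := Real.log_pos h1
    positivity
  set D : ℝ := (√(2 * Real.pi))⁻¹ * Real.exp (-3 / 2)
  have hD0 : 0 < D := by positivity
  have htail : ∀ s r : ℝ, 0 ≤ s → r ≤ D * Real.exp (-s ^ 2 / 2) / (s + 1) / 2 →
      ENNReal.ofReal r ≤ gaussianReal 0 1 (Set.Ici s) / 2 := by
    intro s r hs hr
    refine (ENNReal.ofReal_le_ofReal hr).trans ?_
    rw [ENNReal.ofReal_div_of_pos zero_lt_two, ENNReal.ofReal_ofNat]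
    exact ENNReal.div_le_div_right (exp_div_le_gaussianReal_Ici hs) 2
  refine exists_pos_forall_of_eventually (c₀ := D / (3 * √γ + 2) / 2) ?_ ?_ (by positivity) ?_
  · intro c c' n hcc hQ hn hlt
    obtain ⟨s, hs, hst, hle⟩ := hQ hn hlt
    refine ⟨s, hs, hst, (ENNReal.ofReal_le_ofReal ?_).trans hle⟩
    have := hb n hn
    gcongr
  · intro n
    by_cases hn : 2 ≤ n ∧ γ * Real.log n < n
    · obtain ⟨hn, hlt⟩ := hn
      have h1 : (1 : ℝ) < n := by exact_mod_cast hn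
      have hlog := Real.log_pos h1
      set u : ℝ := γ * Real.log n / n with hu
      have hu0 : 0 < u := by positivity
      have hu1 : 0 < 1 - u := sub_pos.2 ((div_lt_one (by linarith)).2 hlt)
      set s : ℝ := √(u * (8 * n) / (1 - u)) with hs
      have hs0 : 0 < s := by positivity
      refine ⟨D * Real.exp (-s ^ 2 / 2) / (s + 1) / 2 * ((n : ℝ) ^ (4.5 * γ) * √(Real.log n)),
        mul_pos (by positivity) (hb n hn), fun _ _ => ⟨s, hs0, ?_, htail s _ hs0.le ?_⟩⟩
      · rw [hs, Real.sq_sqrt (by positivity), div_mul_cancel₀ _ hu1.ne']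
      · rw [mul_div_cancel_right₀ _ (hb n hn).ne']
    · exact ⟨1, one_pos, fun h1 h2 => absurd ⟨h1, h2⟩ hn⟩
  · have hlim : ∀ᶠ n : ℕ in Filter.atTop, Real.log n ≤ 1 / (9 * γ) * n := by
      have h := (Real.isLittleO_log_id_atTop.comp_tendsto tendsto_natCast_atTop_atTop).bound
        (show 0 < 1 / (9 * γ) by positivity)
      filter_upwards [h] with n hn
      exact (le_abs_self _).trans (by simpa using hn)
    filter_upwards [hlim] with n hlog_le hn _
    have h1 : (1 : ℝ) < n := by exact_mod_cast hn
    have hn0 : (0 : ℝ) < n := by linarith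
    have hlog := Real.log_pos h1
    have hsq : (3 * √(γ * Real.log n)) ^ 2 = 9 * (γ * Real.log n) := by
      rw [mul_pow, Real.sq_sqrt (by positivity)]
      norm_num
    refine ⟨3 * √(γ * Real.log n), by positivity, ?_, htail _ _ (by positivity) ?_⟩
    · have hu : γ * Real.log n / n ≤ 1 / 9 := by
        rw [div_le_iff₀ hn0]
        calc γ * Real.log n ≤ γ * (1 / (9 * γ) * n) := by gcongr
          _ = 1 / 9 * n := by field_simp
      have h8 : γ * Real.log n / n * (8 * n) = 8 * (γ * Real.log n) := by field_simp
      rw [hsq, h8]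
      nlinarith [mul_pos hγ hlog]
    · have hexp : Real.exp (-(3 * √(γ * Real.log n)) ^ 2 / 2) = ((n : ℝ) ^ (4.5 * γ))⁻¹ := by
        rw [hsq, ← Real.rpow_neg hn0.le, Real.rpow_def_of_pos hn0]
        congr 1
        ring
      have hsqrt : 1 ≤ 2 * √(Real.log n) := by linarith [half_le_sqrt_log hn]
      rw [hexp, Real.sqrt_mul hγ.le]
      calc D / (3 * √γ + 2) / 2 / ((n : ℝ) ^ (4.5 * γ) * √(Real.log n))
          = D * ((n : ℝ) ^ (4.5 * γ))⁻¹ / ((3 * √γ + 2) * √(Real.log n)) / 2 := by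
            field_simp
        _ ≤ D * ((n : ℝ) ^ (4.5 * γ))⁻¹ / (3 * (√γ * √(Real.log n)) + 1) / 2 := by
            gcongr
            linarith

/-- for every `γ > 0` there is `c(γ) > 0` such that for every `n ≥ 2` with
`γ·ln n < n` and every `a ∈ ℝ^{4n}`, a uniform random point `ξ` of the unit sphere
`S^{4n−1} ⊂ ℝ^{4n}` (the unique rotation-invariant probability measure on the sphere)
satisfies `Prob{⟨a, ξ⟩ ≥ √(γ ln n / n)·‖a‖} ≥ c(γ) / (n^{4.5γ} √(ln n))`. -/
theorem stmt_1 (γ : ℝ) (hγ : 0 < γ) :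
    ∃ c : ℝ, 0 < c ∧
      ∀ n : ℕ, ∀ _hn : 2 ≤ n, ∀ _hγn : γ * Real.log n < n,
        ∀ a : EuclideanSpace ℝ (Fin (4 * n)),
        ∀ μ : Measure (EuclideanSpace ℝ (Fin (4 * n))),
          IsProbabilityMeasure μ →
          μ (Metric.sphere (0 : EuclideanSpace ℝ (Fin (4 * n))) 1) = 1 →
          (∀ T : EuclideanSpace ℝ (Fin (4 * n)) ≃ₗᵢ[ℝ] EuclideanSpace ℝ (Fin (4 * n)),
            μ.map (fun x => T x) = μ) →
          ENNReal.ofReal (c / ((n : ℝ) ^ (4.5 * γ) * Real.sqrt (Real.log n))) ≤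
            μ {x | Real.sqrt (γ * Real.log n / n) * ‖a‖ ≤ ⟪a, x⟫} := by
  obtain ⟨c, hc, h⟩ := exists_gaussian_threshold hγ
  refine ⟨min c (1 / 2), lt_min hc one_half_pos, fun n hn hγn a μ hprob hsph hμ => ?_⟩
  have h1 : (1 : ℝ) < n := by exact_mod_cast hn
  have hlog := Real.log_pos h1
  by_cases ha : a = 0
  · have hsqrt : (1 / 2 : ℝ) ≤ √(Real.log n) := half_le_sqrt_log hn
    have hpow : (1 : ℝ) ≤ (n : ℝ) ^ (4.5 * γ) := Real.one_le_rpow h1.le (by positivity)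
    simp only [ha, norm_zero, mul_zero, inner_zero_left, le_refl, Set.ofPred_true, measure_univ]
    refine ENNReal.ofReal_le_one.2 ((div_le_one (by positivity)).2 ?_)
    refine (min_le_right _ _).trans ?_
    nlinarith
  · obtain ⟨s, hs, hst, hle⟩ := h n hn hγn
    have hu0 : 0 ≤ γ * Real.log n / n := by positivity
    have hu1 : γ * Real.log n / n ≤ 1 := (div_le_one (by linarith)).2 hγn.le
    let i : Fin (4 * n) := ⟨0, by lia⟩
    calc ENNReal.ofReal (min c (1 / 2) / ((n : ℝ) ^ (4.5 * γ) * √(Real.log n)))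
        ≤ ENNReal.ofReal (c / ((n : ℝ) ^ (4.5 * γ) * √(Real.log n))) := by
          refine ENNReal.ofReal_le_ofReal ?_
          gcongr
          exact min_le_left _ _
      _ ≤ gaussianReal 0 1 (Set.Ici s) / 2 := hle
      _ ≤ stdGaussian (EuclideanSpace ℝ (Fin (4 * n))) {g | g ≠ 0 ∧
            √(γ * Real.log n / n) * ‖g‖ ≤ ⟪EuclideanSpace.single i (1 : ℝ), g⟫} := by
          refine gaussianReal_Ici_div_two_le_stdGaussian_cone i hs (Real.sqrt_nonneg _)
            (Real.sqrt_le_one.2 hu1) ?_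
          rw [Real.sq_sqrt hu0, Fintype.card_fin]
          push_cast
          linarith
      _ ≤ _ := measure_cone_le_measure_cap hsph hμ (fun T => stdGaussian_map T) ha (by simp) _
end

section
/- Let γ > 0 and δ > 0. There exists a constant c(γ, δ) > 0, depending only on γ and δ, such that for every integer n ≥ 2 with γ·ln n < n the following holds: if ξ is a random vector distributed according to the uniform probability measure on the Euclidean unit sphere S^{4n−1} ⊂ ℝ^{4n}, then Prob{ ξ₁ ≥ √(γ·ln n / n) } ≥ c(γ, δ) / ( n^{(2 + δ + δ²/2)·γ} · √(ln n) ), where ξ₁ denotes the first coordinate of ξ. -/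
open MeasureTheory ProbabilityTheory

/-- A rotation-invariant probability measure on the unit sphere gives a cap at least the mass which
the standard Gaussian measure gives to the corresponding open cone. -/
lemma stdGaussian_cone_le_cap {E : Type*} [NormedAddCommGroup E] [InnerProductSpace ℝ E]
    [FiniteDimensional ℝ E] [MeasurableSpace E] [BorelSpace E]
    (μ : Measure E) [IsProbabilityMeasure μ] (hμ : μ (Metric.sphere (0 : E) 1) = 1)
    (hinv : ∀ T : E ≃ₗᵢ[ℝ] E, μ.map (fun x => T x) = μ) (u : E) (hu : ‖u‖ = 1) (t : ℝ) :
    stdGaussian E {g | t * ‖g‖ < inner ℝ u g} ≤ μ {x | t ≤ inner ℝ u x} := by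
  have hrot : ∀ v : E, ‖v‖ = 1 → ∃ T : E ≃ₗᵢ[ℝ] E, T v = u := fun v hv =>
    ⟨(ℝ ∙ (v - u))ᗮ.reflection, Submodule.reflection_sub (hv.trans hu.symm)⟩
  let A : Set (E × E) := {p | t * ‖p.1‖ < inner ℝ p.2 p.1}
  have hA : MeasurableSet A := measurableSet_lt (by fun_prop) (by fun_prop)
  have hslice : ∀ g : E, μ (Prod.mk g ⁻¹' A) ≤ μ {x | t ≤ inner ℝ u x} := by
    intro g
    rcases eq_or_ne g 0 with rfl | hg
    · simp [A]
    have hg' : 0 < ‖g‖ := norm_pos_iff.mpr hg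
    obtain ⟨T, hT⟩ := hrot (‖g‖⁻¹ • g) (by rw [norm_smul, norm_inv, norm_norm]; field_simp)
    conv_rhs => rw [← hinv T, Measure.map_apply (by fun_prop)
      (measurableSet_le (by fun_prop) (by fun_prop))]
    refine measure_mono fun x hx => ?_
    simp only [A, Set.mem_preimage, Set.mem_ofPred_eq] at hx ⊢
    rw [← hT, T.inner_map_map, real_inner_smul_left, real_inner_comm, inv_mul_eq_div,
      le_div_iff₀ hg']
    exact hx.le
  have hcone : ∀ᵐ x ∂μ, stdGaussian E ((fun g => (g, x)) ⁻¹' A)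
      = stdGaussian E {g | t * ‖g‖ < inner ℝ u g} := by
    have hsphere : ∀ᵐ x ∂μ, x ∈ Metric.sphere (0 : E) 1 :=
      (prob_compl_eq_zero_iff Metric.isClosed_sphere.measurableSet).mpr hμ
    filter_upwards [hsphere] with x hx
    obtain ⟨T, hT⟩ := hrot x (by simpa using hx)
    conv_rhs => rw [← stdGaussian_map T, Measure.map_apply (by fun_prop)
      (measurableSet_lt (by fun_prop) (by fun_prop))]
    simp [A, ← hT]
  calc stdGaussian E {g | t * ‖g‖ < inner ℝ u g}
      = ∫⁻ x, stdGaussian E ((fun g => (g, x)) ⁻¹' A) ∂μ := by simp [lintegral_congr_ae hcone]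
    _ = ∫⁻ g, μ (Prod.mk g ⁻¹' A) ∂stdGaussian E := by
        rw [← Measure.prod_apply_symm hA, Measure.prod_apply hA]
    _ ≤ ∫⁻ _, μ {x | t ≤ inner ℝ u x} ∂stdGaussian E := lintegral_mono hslice
    _ = μ {x | t ≤ inner ℝ u x} := by simp

lemma gaussianReal_Ioi_ge {a : ℝ} (ha : 0 ≤ a) :
    ENNReal.ofReal ((√(2 * Real.pi))⁻¹ * Real.exp (-(a + 1) ^ 2 / 2)) ≤
      gaussianReal 0 1 (Set.Ioi a) := by
  calc ENNReal.ofReal ((√(2 * Real.pi))⁻¹ * Real.exp (-(a + 1) ^ 2 / 2))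
      = ∫⁻ _ in Set.Ioc a (a + 1),
          ENNReal.ofReal ((√(2 * Real.pi))⁻¹ * Real.exp (-(a + 1) ^ 2 / 2)) := by simp
    _ ≤ ∫⁻ x in Set.Ioc a (a + 1), gaussianPDF 0 1 x := by
        refine setLIntegral_mono (measurable_gaussianPDF 0 1) fun x hx => ?_
        rw [gaussianPDF, gaussianPDFReal]
        refine ENNReal.ofReal_le_ofReal ?_
        have : x ^ 2 ≤ (a + 1) ^ 2 := pow_le_pow_left₀ (ha.trans hx.1.le) hx.2 2
        simp only [NNReal.coe_one, mul_one, sub_zero]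
        gcongr
    _ = gaussianReal 0 1 (Set.Ioc a (a + 1)) := (gaussianReal_apply 0 one_ne_zero _).symm
    _ ≤ gaussianReal 0 1 (Set.Ioi a) := measure_mono Set.Ioc_subset_Ioi_self

lemma integral_sq_gaussianReal : ∫ x, x ^ 2 ∂gaussianReal 0 1 = 1 := by
  have h := variance_of_integral_eq_zero (μ := gaussianReal 0 1) (X := fun x : ℝ => x)
    (by fun_prop) (by simp [integral_id_gaussianReal])
  rw [← h, variance_fun_id_gaussianReal, NNReal.coe_one]

lemma pi_gaussianReal_sum_sq_le_ge {ι : Type*} [Fintype ι] [Nonempty ι] (s : Finset ι) {ε : ℝ}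
    (hε : 0 < ε) :
    ENNReal.ofReal (ε / (1 + ε)) ≤ Measure.pi (fun _ : ι => gaussianReal 0 1)
      {g | ∑ j ∈ s, g j ^ 2 ≤ (1 + ε) * Fintype.card ι} := by
  set P := Measure.pi (fun _ : ι => gaussianReal 0 1)
  have hcard : (0 : ℝ) < Fintype.card ι := by exact_mod_cast Fintype.card_pos
  have hint : ∀ j : ι, Integrable (fun g : ι → ℝ => g j ^ 2) P := fun j =>
    integrable_comp_eval (μ := fun _ : ι => gaussianReal 0 1) (i := j) (f := fun x : ℝ => x ^ 2)
      (memLp_id_gaussianReal 2).integrable_sq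
  have hmean : ∫ g, ∑ j ∈ s, g j ^ 2 ∂P = s.card := by
    rw [integral_finsetSum _ fun j _ => hint j]
    have : ∀ j : ι, ∫ g, g j ^ 2 ∂P = 1 := fun j => by
      rw [← integral_sq_gaussianReal]
      exact integral_comp_eval (μ := fun _ : ι => gaussianReal 0 1) (i := j)
        (f := fun x : ℝ => x ^ 2) (by fun_prop)
    simp [this]
  have hmarkov := mul_meas_ge_le_integral_of_nonneg (μ := P) (f := fun g => ∑ j ∈ s, g j ^ 2)
    (Filter.Eventually.of_forall fun g => Finset.sum_nonneg fun j _ => sq_nonneg (g j))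
    (integrable_finsetSum _ fun j _ => hint j) ((1 + ε) * Fintype.card ι)
  have hs : (s.card : ℝ) ≤ Fintype.card ι := by exact_mod_cast s.card_le_univ
  have hge : P.real {g | (1 + ε) * Fintype.card ι ≤ ∑ j ∈ s, g j ^ 2} ≤ 1 / (1 + ε) := by
    rw [le_div_iff₀ (by positivity)]
    rw [hmean] at hmarkov
    nlinarith
  have hcompl := probReal_add_probReal_compl (μ := P)
    (s := {g | (1 + ε) * Fintype.card ι ≤ ∑ j ∈ s, g j ^ 2})
    (measurableSet_le (by fun_prop) (by fun_prop))
  have hle : P.real {g | (1 + ε) * Fintype.card ι ≤ ∑ j ∈ s, g j ^ 2}ᶜ ≤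
      P.real {g | ∑ j ∈ s, g j ^ 2 ≤ (1 + ε) * Fintype.card ι} :=
    measureReal_mono fun g hg => (not_le.mp (by simpa using hg)).le
  refine ENNReal.ofReal_le_of_le_toReal ?_
  have : ε / (1 + ε) = 1 - 1 / (1 + ε) := by field_simp; ring
  rw [this]
  change _ ≤ P.real _
  linarith

lemma stdGaussian_cone_ge {ι : Type*} [Fintype ι] (i : ι) {t ε : ℝ} (ht : 0 ≤ t) (ht1 : t < 1)
    (hε : 0 < ε) :
    ENNReal.ofReal (ε / (1 + ε) * ((√(2 * Real.pi))⁻¹ *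
        Real.exp (-(√(t ^ 2 / (1 - t ^ 2) * ((1 + ε) * Fintype.card ι)) + 1) ^ 2 / 2))) ≤
      stdGaussian (EuclideanSpace ℝ ι) {g | t * ‖g‖ < g i} := by
  classical
  have : Nonempty ι := ⟨i⟩
  have ht2 : 0 < 1 - t ^ 2 := by nlinarith
  set M : ℝ := (1 + ε) * Fintype.card ι
  set a := √(t ^ 2 / (1 - t ^ 2) * M)
  have ha2 : a ^ 2 = t ^ 2 / (1 - t ^ 2) * M := Real.sq_sqrt (by positivity)
  have hsub : ∀ g : ι → ℝ, a < g i → ∑ j ∈ Finset.univ.erase i, g j ^ 2 ≤ M →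
      t * ‖WithLp.toLp 2 g‖ < g i := by
    intro g hg hR
    have hgi : 0 < g i := (Real.sqrt_nonneg _).trans_lt hg
    refine lt_of_pow_lt_pow_left₀ 2 hgi.le ?_
    have hsq : a ^ 2 < g i ^ 2 := pow_lt_pow_left₀ hg (Real.sqrt_nonneg _) two_ne_zero
    rw [ha2, div_mul_eq_mul_div, div_lt_iff₀ ht2] at hsq
    rw [mul_pow, EuclideanSpace.real_norm_sq_eq, ← Finset.add_sum_erase _ _ (Finset.mem_univ i)]
    nlinarith [mul_le_mul_of_nonneg_left hR (sq_nonneg t)]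
  set P := Measure.pi (fun _ : ι => gaussianReal 0 1)
  have hindep : IndepFun (fun g : ι → ℝ => g i)
      (fun g : ι → ℝ => ∑ j ∈ Finset.univ.erase i, g j ^ 2) P := by
    have h := (iIndepFun_pi (μ := fun _ : ι => gaussianReal 0 1) (X := fun _ x => x)
      (fun _ => by fun_prop)).indepFun_finset {i} (Finset.univ.erase i) (by simp)
      (fun j => by fun_prop)
    have hφ : Measurable fun x : ({i} : Finset ι) → ℝ => x ⟨i, by simp⟩ := measurable_pi_apply _
    have hψ : Measurable fun x : ↥(Finset.univ.erase i) → ℝ => ∑ j, x j ^ 2 := by fun_prop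
    have h' := h.comp hφ hψ
    convert h' using 1
    · rfl
    · ext g
      exact (Finset.sum_coe_sort (Finset.univ.erase i) fun j => g j ^ 2).symm
  have hmarg : P ((fun g : ι → ℝ => g i) ⁻¹' Set.Ioi a) = gaussianReal 0 1 (Set.Ioi a) :=
    (measurePreserving_eval (fun _ : ι => gaussianReal 0 1) i).measure_preimage
      measurableSet_Ioi.nullMeasurableSet
  have hinter := hindep.measure_inter_preimage_eq_mul (Set.Ioi a) (Set.Iic M) measurableSet_Ioi
    measurableSet_Iic
  rw [← map_pi_eq_stdGaussian, Measure.map_apply (by fun_prop)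
    (measurableSet_lt (by fun_prop) (by fun_prop)), ENNReal.ofReal_mul (by positivity), mul_comm]
  calc _ ≤ gaussianReal 0 1 (Set.Ioi a) *
        P ((fun g : ι → ℝ => ∑ j ∈ Finset.univ.erase i, g j ^ 2) ⁻¹' Set.Iic M) :=
        mul_le_mul' (gaussianReal_Ioi_ge (Real.sqrt_nonneg _))
          (pi_gaussianReal_sum_sq_le_ge (Finset.univ.erase i) hε)
    _ = P ((fun g : ι → ℝ => g i) ⁻¹' Set.Ioi a ∩
          (fun g : ι → ℝ => ∑ j ∈ Finset.univ.erase i, g j ^ 2) ⁻¹' Set.Iic M) := by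
        rw [← hmarg, ← hinter]
    _ ≤ _ := measure_mono fun g hg => hsub g hg.1 hg.2

lemma exists_pos_le_of_lt {p : ℕ → Prop} {f : ℕ → ℝ} (hf : ∀ n, p n → 0 < f n) (N : ℕ) :
    ∃ c : ℝ, 0 < c ∧ ∀ n < N, p n → c ≤ f n := by
  induction N with
  | zero => exact ⟨1, one_pos, by simp⟩
  | succ N ih =>
    obtain ⟨c, hc, hcf⟩ := ih
    by_cases hN : p N
    · refine ⟨min c (f N), lt_min hc (hf N hN), fun n hn hpn => ?_⟩
      rcases Nat.lt_succ_iff_lt_or_eq.mp hn with h | rfl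
      · exact (min_le_left _ _).trans (hcf n h hpn)
      · exact min_le_right _ _
    · refine ⟨c, hc, fun n hn hpn => ?_⟩
      rcases Nat.lt_succ_iff_lt_or_eq.mp hn with h | rfl
      · exact hcf n h hpn
      · exact absurd hpn hN

lemma exists_pos_le_exp {γ ε κ : ℝ} (hγ : 0 < γ) (hε : 0 < ε) (hκ : 2 * (1 + ε) ^ 3 ≤ κ) :
    ∃ c : ℝ, 0 < c ∧ ∀ n : ℕ, 2 ≤ n →
      c / ((n : ℝ) ^ (κ * γ) * √(Real.log n)) ≤
        Real.exp (-(2 * (1 + ε) ^ 2 * γ * Real.log n / (1 - γ * Real.log n / n))) := by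
  have hlim : Filter.Tendsto (fun n : ℕ => γ * Real.log n / n) Filter.atTop (nhds 0) := by
    have h := (Real.isLittleO_log_id_atTop.tendsto_div_nhds_zero.comp
      tendsto_natCast_atTop_atTop).const_mul γ
    simpa [Function.comp_def, mul_div_assoc] using h
  have hη : 0 < ε / (1 + ε) := by positivity
  obtain ⟨N, hN⟩ := Filter.eventually_atTop.mp (hlim.eventually (gt_mem_nhds hη))
  have hlog : ∀ n : ℕ, 2 ≤ n → 0 < Real.log n := fun n hn =>
    Real.log_pos (by exact_mod_cast hn)
  have hpow : ∀ n : ℕ, 2 ≤ n → 0 < (n : ℝ) ^ (κ * γ) * √(Real.log n) := fun n hn => by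
    have := hlog n hn
    have : (0 : ℝ) < n := by exact_mod_cast (by omega : 0 < n)
    positivity
  obtain ⟨c, hc, hcf⟩ := exists_pos_le_of_lt (p := fun n => 2 ≤ n)
    (f := fun n => Real.exp (-(2 * (1 + ε) ^ 2 * γ * Real.log n / (1 - γ * Real.log n / n))) *
      ((n : ℝ) ^ (κ * γ) * √(Real.log n)))
    (fun n hn => mul_pos (Real.exp_pos _) (hpow n hn)) N
  have hl2 : 0 < Real.log 2 := Real.log_pos one_lt_two
  refine ⟨min c √(Real.log 2), lt_min hc (Real.sqrt_pos.mpr hl2), fun n hn => ?_⟩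
  rw [div_le_iff₀ (hpow n hn)]
  rcases lt_or_ge n N with h | h
  · exact (min_le_left _ _).trans (hcf n h hn)
  have hn0 : (0 : ℝ) < n := by exact_mod_cast (by omega : 0 < n)
  have hlog2 : √(Real.log 2) ≤ √(Real.log n) :=
    Real.sqrt_le_sqrt (Real.log_le_log two_pos (by exact_mod_cast hn))
  refine (min_le_right _ _).trans (hlog2.trans ?_)
  rw [← mul_assoc, Real.rpow_def_of_pos hn0, ← Real.exp_add]
  refine le_mul_of_one_le_left (Real.sqrt_nonneg _) (Real.one_le_exp ?_)
  have hx : 1 / (1 + ε) < 1 - γ * Real.log n / n := by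
    have h1 := hN n h
    have h2 : 1 / (1 + ε) = 1 - ε / (1 + ε) := by field_simp; ring
    linarith
  have hx0 : 0 < 1 - γ * Real.log n / n := lt_trans (by positivity) hx
  have hw : 0 < γ * Real.log n := mul_pos hγ (hlog n hn)
  have hexp : 2 * (1 + ε) ^ 2 * γ * Real.log n / (1 - γ * Real.log n / n) ≤
      2 * (1 + ε) ^ 3 * (γ * Real.log n) := by
    rw [div_le_iff₀ hx0]
    rw [div_lt_iff₀ (by positivity)] at hx
    nlinarith [mul_le_mul_of_nonneg_left hx.le
      (by positivity : 0 ≤ 2 * (1 + ε) ^ 2 * (γ * Real.log n))]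
  nlinarith [mul_le_mul_of_nonneg_right hκ hw.le]

/-- for every `γ > 0` and `δ > 0` there is `c(γ,δ) > 0` such that for every
`n ≥ 2` with `γ·ln n < n`, a uniform random point `ξ` of the unit sphere
`S^{4n−1} ⊂ ℝ^{4n}` (the unique rotation-invariant probability measure on the sphere)
satisfies `Prob{ξ₁ ≥ √(γ ln n / n)} ≥ c(γ,δ) / (n^{(2+δ+δ²/2)γ} √(ln n))`. -/
theorem stmt_2 (γ δ : ℝ) (hγ : 0 < γ) (hδ : 0 < δ) :
    ∃ c : ℝ, 0 < c ∧
      ∀ n : ℕ, ∀ _hn : 2 ≤ n, ∀ _hγn : γ * Real.log n < n,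
        ∀ μ : Measure (EuclideanSpace ℝ (Fin (4 * n))),
          IsProbabilityMeasure μ →
          μ (Metric.sphere (0 : EuclideanSpace ℝ (Fin (4 * n))) 1) = 1 →
          (∀ T : EuclideanSpace ℝ (Fin (4 * n)) ≃ₗᵢ[ℝ] EuclideanSpace ℝ (Fin (4 * n)),
            μ.map (fun x => T x) = μ) →
          ENNReal.ofReal (c / ((n : ℝ) ^ ((2 + δ + δ ^ 2 / 2) * γ) * Real.sqrt (Real.log n))) ≤
            μ {x | Real.sqrt (γ * Real.log n / n) ≤ x ⟨0, by omega⟩} := by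
  obtain ⟨ε, hε, hε1, hεδ⟩ : ∃ ε : ℝ, 0 < ε ∧ ε ≤ 1 ∧ 14 * ε ≤ δ :=
    ⟨min 1 (δ / 14), by positivity, min_le_left _ _, by linarith [min_le_right 1 (δ / 14)]⟩
  obtain ⟨c, hc, hcn⟩ := exists_pos_le_exp (κ := 2 + δ + δ ^ 2 / 2) hγ hε
    (by nlinarith [mul_le_mul_of_nonneg_left hε1 hε.le,
      mul_le_mul_of_nonneg_left hε1 (sq_nonneg ε), sq_nonneg δ])
  set K : ℝ := ε / (1 + ε) * (√(2 * Real.pi))⁻¹ * Real.exp (-((1 + 1 / ε) / 2)) with hKdef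
  have hK : 0 < K := by positivity
  refine ⟨K * c, mul_pos hK hc, fun n hn hγn μ hμ hsphere hinv => ?_⟩
  have hn0 : (0 : ℝ) < n := by exact_mod_cast (by omega : 0 < n)
  have hw : 0 < γ * Real.log n := mul_pos hγ (Real.log_pos (by exact_mod_cast hn))
  have hw1 : γ * Real.log n / n < 1 := (div_lt_one hn0).mpr hγn
  set t := √(γ * Real.log n / n) with ht
  have ht2 : t ^ 2 = γ * Real.log n / n := Real.sq_sqrt (by positivity)
  have ht1 : t < 1 := by rw [ht, Real.sqrt_lt' one_pos]; simpa using hw1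
  let i : Fin (4 * n) := ⟨0, by omega⟩
  have hcap := stdGaussian_cone_le_cap μ hsphere hinv (EuclideanSpace.single i 1) (by simp) t
  simp only [EuclideanSpace.inner_single_left, map_one, one_mul] at hcap
  refine le_trans ?_ ((stdGaussian_cone_ge i (Real.sqrt_nonneg _) ht1 hε).trans hcap)
  refine ENNReal.ofReal_le_ofReal ?_
  have hd : 0 < 1 - t ^ 2 := by rw [ht2]; linarith
  set a := √(t ^ 2 / (1 - t ^ 2) * ((1 + ε) * Fintype.card (Fin (4 * n))))
  have ha2 : a ^ 2 = 4 * (1 + ε) * γ * Real.log n / (1 - t ^ 2) := by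
    rw [Real.sq_sqrt (by positivity), Fintype.card_fin, div_mul_eq_mul_div]
    congr 1
    rw [ht2]
    push_cast
    field_simp
  have hamgm : (a + 1) ^ 2 ≤ (1 + ε) * a ^ 2 + (1 + 1 / ε) := by
    have : (1 + ε) * a ^ 2 + (1 + 1 / ε) - (a + 1) ^ 2 = (ε * a - 1) ^ 2 / ε := by
      field_simp; ring
    have : 0 ≤ (ε * a - 1) ^ 2 / ε := by positivity
    linarith
  have hexp : -((1 + 1 / ε) / 2) + -(2 * (1 + ε) ^ 2 * γ * Real.log n / (1 - t ^ 2)) ≤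
      -(a + 1) ^ 2 / 2 := by
    have : 2 * (1 + ε) ^ 2 * γ * Real.log n / (1 - t ^ 2) = (1 + ε) * a ^ 2 / 2 := by
      rw [ha2]; ring
    rw [this]
    linarith
  calc _ = K * (c / ((n : ℝ) ^ ((2 + δ + δ ^ 2 / 2) * γ) * √(Real.log n))) := mul_div_assoc ..
    _ ≤ K * Real.exp (-(2 * (1 + ε) ^ 2 * γ * Real.log n / (1 - t ^ 2))) := by
        rw [ht2]
        exact mul_le_mul_of_nonneg_left (hcn n hn) hK.le
    _ = ε / (1 + ε) * ((√(2 * Real.pi))⁻¹ * Real.exp (-((1 + 1 / ε) / 2) +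
          -(2 * (1 + ε) ^ 2 * γ * Real.log n / (1 - t ^ 2)))) := by
        rw [hKdef, Real.exp_add]; ring
    _ ≤ _ := by gcongr
end

section
/- Let V be a real vector space, d ≥ 1, and let f : V^d → ℝ be a symmetric multilinear map. Then for all x¹, …, x^d ∈ V there exist signs β₁, …, β_d ∈ {−1, 1} such that (∏_{i=1}^d β_i) · f(w, w, …, w) ≥ d^{−d} · d! · f(x¹, …, x^d), where w = (1/d)·Σ_{k=1}^d β_k x^k. (This is the sign-selection step, inequality (5.2), in the rounding analysis of the paper's Theorem 5.1.) -/
open Finset in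
/-- Orthogonality of sign characters: the sum over all sign vectors `ε` of
`(∏ i, ε i) * ∏ i, ε (r i)` is `0` unless `r` is surjective. -/
theorem sum_signs_eq_zero_of_not_surjective {ι : Type*} [Fintype ι] [DecidableEq ι] {r : ι → ι}
    (hr : ¬ Function.Surjective r) :
    ∑ ε : ι → ℤˣ, (∏ i, ((ε i : ℤ) : ℝ)) * ∏ i, ((ε (r i) : ℤ) : ℝ) = 0 := by
  obtain ⟨j, hj⟩ := not_forall.mp hr
  have hflip : ∀ i, (Pi.mulSingle j (-1) : ι → ℤˣ) (r i) = 1 := fun i =>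
    Pi.mulSingle_eq_of_ne (fun h => hj ⟨i, h⟩) _
  have hprod : ∏ i, (((Pi.mulSingle j (-1) : ι → ℤˣ) i : ℤ) : ℝ) = -1 := by
    rw [prod_eq_single j] <;> simp +contextual [Pi.mulSingle_eq_of_ne]
  refine self_eq_neg.mp ?_
  rw [← sum_neg_distrib, ← Equiv.sum_comp (Equiv.mulLeft (Pi.mulSingle j (-1) : ι → ℤˣ))]
  refine sum_congr rfl fun ε _ => ?_
  simp only [Equiv.coe_mulLeft, Pi.mul_apply, hflip, one_mul, Units.val_mul, Int.cast_mul,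
    prod_mul_distrib, hprod]
  ring

open Finset in
theorem sum_signs_perm {ι : Type*} [Fintype ι] [DecidableEq ι] (σ : Equiv.Perm ι) :
    ∑ ε : ι → ℤˣ, (∏ i, ((ε i : ℤ) : ℝ)) * ∏ i, ((ε (σ i) : ℤ) : ℝ) =
      Fintype.card (ι → ℤˣ) := by
  have hone : ∀ ε : ι → ℤˣ, (∏ i, ((ε i : ℤ) : ℝ)) * ∏ i, ((ε (σ i) : ℤ) : ℝ) = 1 := fun ε => by
    rw [Equiv.prod_comp σ fun i => ((ε i : ℤ) : ℝ), ← prod_mul_distrib]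
    refine prod_eq_one fun i _ => ?_
    rcases Int.units_eq_one_or (ε i) with h | h <;> simp [h]
  simp only [hone, sum_const, card_univ, nsmul_eq_mul, mul_one]

open Finset in
/-- The polarization identity for a symmetric multilinear form. -/
theorem MultilinearMap.sum_signs_mul_map_sum {ι V : Type*} [Fintype ι] [DecidableEq ι]
    [AddCommGroup V] [Module ℝ V] (f : MultilinearMap ℝ (fun _ : ι => V) ℝ)
    (hsymm : ∀ (x : ι → V) (σ : Equiv.Perm ι), f (fun i => x (σ i)) = f x) (x : ι → V) :
    ∑ ε : ι → ℤˣ, (∏ i, ((ε i : ℤ) : ℝ)) * f (fun _ => ∑ k, ((ε k : ℤ) : ℝ) • x k) =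
      Fintype.card (ι → ℤˣ) * ((Fintype.card ι).factorial * f x) := by
  calc
    _ = ∑ r : ι → ι, (∑ ε : ι → ℤˣ, (∏ i, ((ε i : ℤ) : ℝ)) * ∏ i, ((ε (r i) : ℤ) : ℝ)) *
          f (fun i => x (r i)) := by
      simp_rw [f.map_sum, f.map_smul_univ, sum_mul, mul_sum, smul_eq_mul]
      rw [sum_comm]
      simp_rw [mul_assoc]
    _ = ∑ σ : Equiv.Perm ι, (Fintype.card (ι → ℤˣ) : ℝ) * f x := by
      refine (sum_of_injOn (fun σ : Equiv.Perm ι => (σ : ι → ι)) DFunLike.coe_injective.injOn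
        (fun _ _ => mem_coe.mpr (mem_univ _)) (fun r _ hr => ?_) fun σ _ => ?_).symm
      · rw [sum_signs_eq_zero_of_not_surjective, zero_mul]
        exact fun hsurj => hr ⟨Equiv.ofBijective r hsurj.bijective_of_finite, by simp, rfl⟩
      · rw [sum_signs_perm, hsymm]
    _ = _ := by
      rw [sum_const, card_univ, Fintype.card_perm, nsmul_eq_mul]
      ring

/-- sign-selection step, inequality (5.2): for a symmetric multilinear map
`f : V^d → ℝ` on a real vector space and any `x¹, …, x^d ∈ V` there are signs
`β₁, …, β_d ∈ {−1,1}` with `(Πᵢ βᵢ)·f(w, …, w) ≥ d^{−d}·d!·f(x¹, …, x^d)`,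
where `w = (1/d)·Σₖ βₖ xᵏ`. -/
theorem stmt_10 {V : Type*} [AddCommGroup V] [Module ℝ V] (d : ℕ) (hd : 1 ≤ d)
    (f : MultilinearMap ℝ (fun _ : Fin d => V) ℝ)
    (hsymm : ∀ (x : Fin d → V) (σ : Equiv.Perm (Fin d)), f (fun i => x (σ i)) = f x)
    (x : Fin d → V) :
    ∃ β : Fin d → ℝ, (∀ i, β i = 1 ∨ β i = -1) ∧
      ((d : ℝ) ^ d)⁻¹ * (Nat.factorial d : ℝ) * f x ≤
        (∏ i, β i) * f (fun _ => (1 / (d : ℝ)) • ∑ k, β k • x k) := by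
  obtain ⟨ε, -, hε⟩ : ∃ ε ∈ (Finset.univ : Finset (Fin d → ℤˣ)), (d.factorial : ℝ) * f x ≤
      (∏ i, ((ε i : ℤ) : ℝ)) * f (fun _ => ∑ k, ((ε k : ℤ) : ℝ) • x k) := by
    refine Finset.exists_le_of_sum_le Finset.univ_nonempty (le_of_eq ?_)
    rw [f.sum_signs_mul_map_sum hsymm, Finset.sum_const, Finset.card_univ, Fintype.card_fin,
      nsmul_eq_mul]
  refine ⟨fun i => ((ε i : ℤ) : ℝ), fun i => ?_, ?_⟩
  · rcases Int.units_eq_one_or (ε i) with h | h <;> simp [h]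
  · rw [f.map_smul_univ, Finset.prod_const, Finset.card_univ, Fintype.card_fin, one_div, inv_pow,
      smul_eq_mul, mul_left_comm, mul_assoc]
    exact mul_le_mul_of_nonneg_left hε (by positivity)
end

section
/- Let V be a real normed vector space, let d ≥ 1 be odd, and let f : V^d → ℝ be a symmetric multilinear map that is bounded on the unit ball in each coordinate (e.g. V finite dimensional). Then for all x¹, …, x^d ∈ V with ‖x^k‖ = 1 for each k, there exists x ∈ V with ‖x‖ = 1 such that f(x, x, …, x) ≥ d^{−d} · d! · f(x¹, …, x^d). (Deterministic core of the odd-degree case of the paper's Theorem 5.1: rounding an approximate multilinear solution to a homogeneous polynomial solution loses at most the factor d^{−d}·d!.) -/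
/-- The signs `∏ i, ε i * ∏ i, ε (r i)` average out to zero unless `r` is a permutation. -/
lemma sum_prod_sign_eq_zero {ι : Type*} [Fintype ι] [DecidableEq ι] {r : ι → ι}
    (hr : ¬ Function.Surjective r) :
    ∑ ε : ι → ℤˣ, (((∏ i, ε i) * ∏ i, ε (r i) : ℤˣ) : ℤ) = 0 := by
  obtain ⟨k, hk⟩ : ∃ k, ∀ i, r i ≠ k := by simpa [Function.Surjective] using hr
  have hflip := Fintype.sum_equiv (Equiv.mulLeft (Pi.mulSingle k (-1 : ℤˣ)))
    (fun ε : ι → ℤˣ => -(((∏ i, ε i) * ∏ i, ε (r i) : ℤˣ) : ℤ))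
    (fun ε : ι → ℤˣ => (((∏ i, ε i) * ∏ i, ε (r i) : ℤˣ) : ℤ)) fun ε => by
      have hδ : ∀ i, (Pi.mulSingle k (-1 : ℤˣ) : ι → ℤˣ) (r i) = 1 :=
        fun i => Pi.mulSingle_eq_of_ne (hk i) _
      have hp : ∏ i, (Pi.mulSingle k (-1 : ℤˣ) : ι → ℤˣ) i = -1 :=
        Fintype.prod_pi_mulSingle' k _
      simp only [Equiv.coe_mulLeft, Pi.mul_apply, Finset.prod_mul_distrib, hδ, hp,
        one_mul, neg_mul, Units.val_neg]
  rw [Finset.sum_neg_distrib] at hflip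
  linarith

/-- The polarization identity for a symmetric multilinear form. -/
theorem MultilinearMap.sum_sign_smul_map_sum_sign_smul {ι V : Type*} [Fintype ι] [DecidableEq ι]
    [AddCommGroup V] [Module ℝ V] (f : MultilinearMap ℝ (fun _ : ι => V) ℝ)
    (hsymm : ∀ (x : ι → V) (σ : Equiv.Perm ι), f (fun i => x (σ i)) = f x) (x : ι → V) :
    ∑ ε : ι → ℤˣ, (((∏ i, ε i : ℤˣ) : ℤ) : ℝ) * f (fun _ => ∑ j, ((ε j : ℤ) : ℝ) • x j) =
      2 ^ Fintype.card ι * (Fintype.card ι).factorial * f x := by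
  have hexpand : ∀ ε : ι → ℤˣ,
      (((∏ i, ε i : ℤˣ) : ℤ) : ℝ) * f (fun _ => ∑ j, ((ε j : ℤ) : ℝ) • x j) =
      ∑ r : ι → ι, ((((∏ i, ε i) * ∏ i, ε (r i) : ℤˣ) : ℤ) : ℝ) * f (fun i => x (r i)) := by
    intro ε
    rw [f.map_sum, Finset.mul_sum]
    refine Finset.sum_congr rfl fun r _ => ?_
    rw [f.map_smul_univ (fun i => ((ε (r i) : ℤ) : ℝ)) (fun i => x (r i))]
    push_cast [Units.coe_prod]
    rw [smul_eq_mul, mul_assoc]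
  simp_rw [hexpand]
  rw [Finset.sum_comm]
  simp_rw [← Finset.sum_mul, ← Int.cast_sum]
  rw [← Finset.sum_of_injOn (s := (Finset.univ : Finset (Equiv.Perm ι)))
    (f := fun _ => (2 : ℝ) ^ Fintype.card ι * f x) (fun σ => ⇑σ)
    (DFunLike.coe_injective.injOn) (by simp)]
  · simp [Fintype.card_perm]
    ring
  · intro r _ hr
    rw [sum_prod_sign_eq_zero, Int.cast_zero, zero_mul]
    intro hs
    exact hr ⟨Equiv.ofBijective r ⟨Finite.injective_iff_surjective.2 hs, hs⟩, by simp, rfl⟩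
  · intro σ _
    simp only [Equiv.prod_comp σ, Int.units_mul_self, hsymm]
    simp

/-- Some signed sum `z` of the `x i` satisfies `d! * f x ≤ f (z, …, z)` when `d` is odd. -/
lemma MultilinearMap.exists_norm_le_factorial_mul_le {V : Type*} [SeminormedAddCommGroup V]
    [NormedSpace ℝ V] {d : ℕ} (hodd : Odd d) (f : MultilinearMap ℝ (fun _ : Fin d => V) ℝ)
    (hsymm : ∀ (x : Fin d → V) (σ : Equiv.Perm (Fin d)), f (fun i => x (σ i)) = f x)
    (x : Fin d → V) :
    ∃ z : V, ‖z‖ ≤ ∑ i, ‖x i‖ ∧ (d.factorial : ℝ) * f x ≤ f (fun _ => z) := by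
  have hpol := f.sum_sign_smul_map_sum_sign_smul hsymm x
  obtain ⟨ε, -, hε⟩ : ∃ ε ∈ (Finset.univ : Finset (Fin d → ℤˣ)), (d.factorial : ℝ) * f x ≤
      (((∏ i, ε i : ℤˣ) : ℤ) : ℝ) * f (fun _ => ∑ j, ((ε j : ℤ) : ℝ) • x j) := by
    refine Finset.exists_le_of_sum_le Finset.univ_nonempty ?_
    rw [hpol]
    simp [mul_assoc]
  have habs : ∀ u : ℤˣ, ‖((u : ℤ) : ℝ)‖ = 1 := fun u => by
    rcases Int.units_eq_one_or u with rfl | rfl <;> simp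
  refine ⟨(((∏ i, ε i : ℤˣ) : ℤ) : ℝ) • ∑ j, ((ε j : ℤ) : ℝ) • x j, ?_, ?_⟩
  · rw [norm_smul, habs, one_mul]
    refine (norm_sum_le _ _).trans (Finset.sum_le_sum fun i _ => ?_)
    rw [norm_smul, habs, one_mul]
  · rw [f.map_smul_univ (fun _ => (((∏ i, ε i : ℤˣ) : ℤ) : ℝ))]
    refine hε.trans_eq ?_
    rcases Int.units_eq_one_or (∏ i, ε i) with h | h <;> simp [h, hodd.neg_one_pow]

/-- deterministic core of the odd-degree case of Theorem 5.1: for odd `d`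
and a symmetric multilinear map `f : V^d → ℝ` on a real normed space, bounded on the unit
ball in each coordinate, and any unit vectors `x¹, …, x^d`, there is a unit vector `x` with
`f(x, …, x) ≥ d^{−d}·d!·f(x¹, …, x^d)`. -/
theorem stmt_11 {V : Type*} [NormedAddCommGroup V] [NormedSpace ℝ V] (d : ℕ)
    (hd : 1 ≤ d) (hodd : Odd d)
    (f : MultilinearMap ℝ (fun _ : Fin d => V) ℝ)
    (hsymm : ∀ (x : Fin d → V) (σ : Equiv.Perm (Fin d)), f (fun i => x (σ i)) = f x)
    (hbdd : ∃ C : ℝ, ∀ x : Fin d → V, (∀ i, ‖x i‖ ≤ 1) → |f x| ≤ C)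
    (x : Fin d → V) (hx : ∀ k, ‖x k‖ = 1) :
    ∃ y : V, ‖y‖ = 1 ∧
      ((d : ℝ) ^ d)⁻¹ * (Nat.factorial d : ℝ) * f x ≤ f (fun _ => y) := by
  have hsmul : ∀ (c : ℝ) (z : V), f (fun _ => c • z) = c ^ d * f (fun _ => z) := fun c z => by
    simpa using f.map_smul_univ (fun _ => c) (fun _ => z)
  have hdpos : (0 : ℝ) < d := by exact_mod_cast hd
  rcases le_or_gt (f x) 0 with hneg | hpos
  · have hle : ((d : ℝ) ^ d)⁻¹ * (Nat.factorial d : ℝ) * f x ≤ 0 :=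
      mul_nonpos_of_nonneg_of_nonpos (by positivity) hneg
    rcases le_total 0 (f fun _ => x ⟨0, hd⟩) with h | h
    · exact ⟨x ⟨0, hd⟩, hx _, hle.trans h⟩
    · refine ⟨(-1 : ℝ) • x ⟨0, hd⟩, by simp [hx], hle.trans ?_⟩
      rw [hsmul, hodd.neg_one_pow]
      linarith
  · obtain ⟨z, hzn, hz⟩ := f.exists_norm_le_factorial_mul_le hodd hsymm x
    have hzd : ‖z‖ ≤ d := by simpa [hx] using hzn
    have hfx : 0 < (d.factorial : ℝ) * f x := by positivity
    have hz0 : z ≠ 0 := by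
      rintro rfl
      have h0 := hsmul 0 0
      rw [zero_pow (by omega), zero_mul, smul_zero] at h0
      linarith
    have hnz : 0 < ‖z‖ := norm_pos_iff.2 hz0
    refine ⟨‖z‖⁻¹ • z, by simp [norm_smul, hnz.ne'], ?_⟩
    rw [hsmul, inv_pow, mul_assoc]
    gcongr
end

section
/- Let a = (a₀, a₁, a₂, a₃), b = (b₀, b₁, b₂, b₃), c = (c₀, c₁, c₂, c₃) ∈ ℝ⁴ have nonnegative entries and satisfy a₀² + a₁² + a₂² + a₃² = b₀² + b₁² + b₂² + b₃² = c₀² + c₁² + c₂² + c₃² = 1. Then (a₀b₀ + a₁b₁ + a₂b₂ + a₃b₃)c₀ + (a₁b₀ + a₀b₁ + a₃b₂ + a₂b₃)c₁ + (a₂b₀ + a₃b₁ + a₀b₂ + a₁b₃)c₂ + (a₃b₀ + a₂b₁ + a₁b₂ + a₀b₃)c₃ ≤ 2, and equality is attained at a = b = c = (1/2, 1/2, 1/2, 1/2). (This is the evaluation of the optimal value of problem (C.3) in Appendix C of the paper, giving the upper bound 2√(n₁n₂n₃) in Proposition 6.1.) -/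
/-- A product of three reals, one of which has absolute value at most `2`, is bounded by the sum of
the squares of the other two. -/
lemma mul_mul_le_sq_add_sq {x : ℝ} (hx : x ^ 2 ≤ 4) (y z : ℝ) : x * y * z ≤ y ^ 2 + z ^ 2 := by
  have hx' : |x| ≤ 2 := abs_le_of_sq_le_sq (by linarith) (by norm_num)
  obtain ⟨hl, hu⟩ := abs_le.mp hx'
  nlinarith [mul_nonneg (sub_nonneg.mpr hu) (sq_nonneg (y + z)),
    mul_nonneg (neg_le_iff_add_nonneg.mp hl) (sq_nonneg (y - z))]

/-- The sum of the coordinates of a unit vector of `ℝ⁴` has square at most `4`. -/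
lemma sq_add_add_add_le_four {p q r s : ℝ} (h : p ^ 2 + q ^ 2 + r ^ 2 + s ^ 2 = 1) :
    (p + q + r + s) ^ 2 ≤ 4 := by
  linarith [sq_nonneg (p - q), sq_nonneg (p - r), sq_nonneg (p - s), sq_nonneg (q - r),
    sq_nonneg (q - s), sq_nonneg (r - s)]

/-- optimal value of problem (C.3): for nonnegative `a, b, c ∈ ℝ⁴` with
`Σ aₜ² = Σ bₜ² = Σ cₜ² = 1`, the 16-term form built from the real parts of the commutative
quaternion multiplication table (with all signs made positive) is at most `2`, with
equality at `a = b = c = (1/2, 1/2, 1/2, 1/2)`. -/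
theorem stmt_17 :
    (∀ a₀ a₁ a₂ a₃ b₀ b₁ b₂ b₃ c₀ c₁ c₂ c₃ : ℝ,
      0 ≤ a₀ → 0 ≤ a₁ → 0 ≤ a₂ → 0 ≤ a₃ →
      0 ≤ b₀ → 0 ≤ b₁ → 0 ≤ b₂ → 0 ≤ b₃ →
      0 ≤ c₀ → 0 ≤ c₁ → 0 ≤ c₂ → 0 ≤ c₃ →
      a₀ ^ 2 + a₁ ^ 2 + a₂ ^ 2 + a₃ ^ 2 = 1 →
      b₀ ^ 2 + b₁ ^ 2 + b₂ ^ 2 + b₃ ^ 2 = 1 →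
      c₀ ^ 2 + c₁ ^ 2 + c₂ ^ 2 + c₃ ^ 2 = 1 →
      (a₀ * b₀ + a₁ * b₁ + a₂ * b₂ + a₃ * b₃) * c₀ +
        (a₁ * b₀ + a₀ * b₁ + a₃ * b₂ + a₂ * b₃) * c₁ +
        (a₂ * b₀ + a₃ * b₁ + a₀ * b₂ + a₁ * b₃) * c₂ +
        (a₃ * b₀ + a₂ * b₁ + a₁ * b₂ + a₀ * b₃) * c₃ ≤ 2) ∧
    (((1:ℝ)/2 * (1/2) + 1/2 * (1/2) + 1/2 * (1/2) + 1/2 * (1/2)) * (1/2) +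
      (1/2 * (1/2) + 1/2 * (1/2) + 1/2 * (1/2) + 1/2 * (1/2)) * (1/2) +
      (1/2 * (1/2) + 1/2 * (1/2) + 1/2 * (1/2) + 1/2 * (1/2)) * (1/2) +
      (1/2 * (1/2) + 1/2 * (1/2) + 1/2 * (1/2) + 1/2 * (1/2)) * (1/2) = 2) := by
  refine ⟨?_, by norm_num⟩
  intro a₀ a₁ a₂ a₃ b₀ b₁ b₂ b₃ c₀ c₁ c₂ c₃ _ _ _ _ _ _ _ _ _ _ _ _ ha hb hc
  -- The form is a quarter of `∑ χ, â χ * b̂ χ * ĉ χ` over the characters of the Klein four-group.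
  have h₀ := mul_mul_le_sq_add_sq (sq_add_add_add_le_four ha)
    (b₀ + b₁ + b₂ + b₃) (c₀ + c₁ + c₂ + c₃)
  have h₁ := mul_mul_le_sq_add_sq
    (sq_add_add_add_le_four (p := a₀) (q := a₁) (r := -a₂) (s := -a₃) (by linarith))
    (b₀ + b₁ - b₂ - b₃) (c₀ + c₁ - c₂ - c₃)
  have h₂ := mul_mul_le_sq_add_sq
    (sq_add_add_add_le_four (p := a₀) (q := -a₁) (r := a₂) (s := -a₃) (by linarith))
    (b₀ - b₁ + b₂ - b₃) (c₀ - c₁ + c₂ - c₃)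
  have h₃ := mul_mul_le_sq_add_sq
    (sq_add_add_add_le_four (p := a₀) (q := -a₁) (r := -a₂) (s := a₃) (by linarith))
    (b₀ - b₁ - b₂ + b₃) (c₀ - c₁ - c₂ + c₃)
  linarith
end

section
/- Let n₁, n₂, n₃ ≥ 1. For u ∈ ℝ^m write s(u) = Σ_i u_i. Let x₀, x₁, x₂, x₃ ∈ ℝ^{n₁}, y₀, y₁, y₂, y₃ ∈ ℝ^{n₂}, z₀, z₁, z₂, z₃ ∈ ℝ^{n₃} satisfy Σ_{t=0}^3 ‖x_t‖² = Σ_{t=0}^3 ‖y_t‖² = Σ_{t=0}^3 ‖z_t‖² = 1. Then s(x₀)s(y₀)s(z₀) − s(x₁)s(y₁)s(z₀) + s(x₂)s(y₂)s(z₀) − s(x₃)s(y₃)s(z₀) − s(x₁)s(y₀)s(z₁) − s(x₀)s(y₁)s(z₁) − s(x₃)s(y₂)s(z₁) − s(x₂)s(y₃)s(z₁) + s(x₂)s(y₀)s(z₂) − s(x₃)s(y₁)s(z₂) + s(x₀)s(y₂)s(z₂) − s(x₁)s(y₃)s(z₂) − s(x₃)s(y₀)s(z₃) − s(x₂)s(y₁)s(z₃)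 − s(x₁)s(y₂)s(z₃) − s(x₀)s(y₃)s(z₃) ≤ 2·√(n₁ n₂ n₃). (This is Proposition 6.1 of the paper in real components: for the commutative quaternion tensor 𝓕 with real part the all-ones tensor 𝟙_{n₁×n₂×n₃} and zero imaginary parts, the optimal value of the sphere-constrained multilinear problem (F) with d = 3 is at most v_upper = 2√(n₁n₂n₃).) -/
/-- The product of commutative quaternions `a` and `b` has squared modulus at most twice the product
of the squared moduli. -/
lemma commQuaternion_mul_normSq_le (a₀ a₁ a₂ a₃ b₀ b₁ b₂ b₃ : ℝ) :
    (a₀ * b₀ - a₁ * b₁ + a₂ * b₂ - a₃ * b₃) ^ 2 + (a₁ * b₀ + a₀ * b₁ + a₃ * b₂ + a₂ * b₃) ^ 2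
      + (a₂ * b₀ - a₃ * b₁ + a₀ * b₂ - a₁ * b₃) ^ 2 + (a₃ * b₀ + a₂ * b₁ + a₁ * b₂ + a₀ * b₃) ^ 2
      ≤ 2 * (a₀ ^ 2 + a₁ ^ 2 + a₂ ^ 2 + a₃ ^ 2) * (b₀ ^ 2 + b₁ ^ 2 + b₂ ^ 2 + b₃ ^ 2) := by
  have h : 0 ≤ ((a₀ + a₂) ^ 2 + (a₁ + a₃) ^ 2) * ((b₀ - b₂) ^ 2 + (b₁ - b₃) ^ 2)
      + ((a₀ - a₂) ^ 2 + (a₁ - a₃) ^ 2) * ((b₀ + b₂) ^ 2 + (b₁ + b₃) ^ 2) := by positivity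
  linear_combination h / 2

/-- Cauchy–Schwarz for four-term sums, with signs as in the real part of a product of
commutative quaternions. -/
lemma sq_commQuaternion_re_mul_le (p₀ p₁ p₂ p₃ c₀ c₁ c₂ c₃ : ℝ) :
    (p₀ * c₀ - p₁ * c₁ + p₂ * c₂ - p₃ * c₃) ^ 2
      ≤ (p₀ ^ 2 + p₁ ^ 2 + p₂ ^ 2 + p₃ ^ 2) * (c₀ ^ 2 + c₁ ^ 2 + c₂ ^ 2 + c₃ ^ 2) := by
  have h := Finset.sum_mul_sq_le_sq_mul_sq Finset.univ ![p₀, -p₁, p₂, -p₃] ![c₀, c₁, c₂, c₃]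
  simp only [Fin.sum_univ_four, Matrix.cons_val] at h
  linear_combination h

/-- The squared sum of the entries of a vector is at most its dimension times its squared norm. -/
lemma EuclideanSpace.sq_sum_le {n : ℕ} (u : EuclideanSpace ℝ (Fin n)) :
    (∑ i, u i) ^ 2 ≤ n * ‖u‖ ^ 2 := by
  rw [EuclideanSpace.real_norm_sq_eq]
  simpa using sq_sum_le_card_mul_sum_sq (s := Finset.univ) (f := fun i => u i)

lemma EuclideanSpace.sum_sq_sum_le {n : ℕ} {u₀ u₁ u₂ u₃ : EuclideanSpace ℝ (Fin n)}
    (hu : ‖u₀‖ ^ 2 + ‖u₁‖ ^ 2 + ‖u₂‖ ^ 2 + ‖u₃‖ ^ 2 = 1) :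
    (∑ i, u₀ i) ^ 2 + (∑ i, u₁ i) ^ 2 + (∑ i, u₂ i) ^ 2 + (∑ i, u₃ i) ^ 2 ≤ n := by
  linear_combination sq_sum_le u₀ + sq_sum_le u₁ + sq_sum_le u₂ + sq_sum_le u₃ + n * hu

/-- Proposition 6.1 in real components: with `s(u) = Σᵢ uᵢ`, for real
component vectors of commutative quaternion vectors `x ∈ ℍ^{n₁}`, `y ∈ ℍ^{n₂}`,
`z ∈ ℍ^{n₃}` on the quaternion unit spheres (`Σₜ‖xₜ‖² = Σₜ‖yₜ‖² = Σₜ‖zₜ‖² = 1`), the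
16-term expression `Re F(x,y,z)` for the all-ones tensor is at most `2√(n₁n₂n₃)`. -/
theorem stmt_18 (n₁ n₂ n₃ : ℕ) (h₁ : 1 ≤ n₁) (h₂ : 1 ≤ n₂) (h₃ : 1 ≤ n₃)
    (x₀ x₁ x₂ x₃ : EuclideanSpace ℝ (Fin n₁))
    (y₀ y₁ y₂ y₃ : EuclideanSpace ℝ (Fin n₂))
    (z₀ z₁ z₂ z₃ : EuclideanSpace ℝ (Fin n₃))
    (hx : ‖x₀‖ ^ 2 + ‖x₁‖ ^ 2 + ‖x₂‖ ^ 2 + ‖x₃‖ ^ 2 = 1)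
    (hy : ‖y₀‖ ^ 2 + ‖y₁‖ ^ 2 + ‖y₂‖ ^ 2 + ‖y₃‖ ^ 2 = 1)
    (hz : ‖z₀‖ ^ 2 + ‖z₁‖ ^ 2 + ‖z₂‖ ^ 2 + ‖z₃‖ ^ 2 = 1) :
    (∑ i, x₀ i) * (∑ j, y₀ j) * (∑ k, z₀ k) - (∑ i, x₁ i) * (∑ j, y₁ j) * (∑ k, z₀ k)
      + (∑ i, x₂ i) * (∑ j, y₂ j) * (∑ k, z₀ k) - (∑ i, x₃ i) * (∑ j, y₃ j) * (∑ k, z₀ k)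
      - (∑ i, x₁ i) * (∑ j, y₀ j) * (∑ k, z₁ k) - (∑ i, x₀ i) * (∑ j, y₁ j) * (∑ k, z₁ k)
      - (∑ i, x₃ i) * (∑ j, y₂ j) * (∑ k, z₁ k) - (∑ i, x₂ i) * (∑ j, y₃ j) * (∑ k, z₁ k)
      + (∑ i, x₂ i) * (∑ j, y₀ j) * (∑ k, z₂ k) - (∑ i, x₃ i) * (∑ j, y₁ j) * (∑ k, z₂ k)
      + (∑ i, x₀ i) * (∑ j, y₂ j) * (∑ k, z₂ k) - (∑ i, x₁ i) * (∑ j, y₃ j) * (∑ k, z₂ k)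
      - (∑ i, x₃ i) * (∑ j, y₀ j) * (∑ k, z₃ k) - (∑ i, x₂ i) * (∑ j, y₁ j) * (∑ k, z₃ k)
      - (∑ i, x₁ i) * (∑ j, y₂ j) * (∑ k, z₃ k) - (∑ i, x₀ i) * (∑ j, y₃ j) * (∑ k, z₃ k)
      ≤ 2 * Real.sqrt (n₁ * n₂ * n₃) := by
  have hX := EuclideanSpace.sum_sq_sum_le hx
  have hY := EuclideanSpace.sum_sq_sum_le hy
  have hZ := EuclideanSpace.sum_sq_sum_le hz
  generalize (∑ i, x₀ i) = a₀, (∑ i, x₁ i) = a₁, (∑ i, x₂ i) = a₂, (∑ i, x₃ i) = a₃ at *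
  generalize (∑ i, y₀ i) = b₀, (∑ i, y₁ i) = b₁, (∑ i, y₂ i) = b₂, (∑ i, y₃ i) = b₃ at *
  generalize (∑ i, z₀ i) = c₀, (∑ i, z₁ i) = c₁, (∑ i, z₂ i) = c₂, (∑ i, z₃ i) = c₃ at *
  have key : ((a₀ * b₀ - a₁ * b₁ + a₂ * b₂ - a₃ * b₃) * c₀
      - (a₁ * b₀ + a₀ * b₁ + a₃ * b₂ + a₂ * b₃) * c₁
      + (a₂ * b₀ - a₃ * b₁ + a₀ * b₂ - a₁ * b₃) * c₂
      - (a₃ * b₀ + a₂ * b₁ + a₁ * b₂ + a₀ * b₃) * c₃) ^ 2 ≤ 2 ^ 2 * (n₁ * n₂ * n₃ : ℝ) := by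
    calc _ ≤ _ := sq_commQuaternion_re_mul_le ..
      _ ≤ 2 * (a₀ ^ 2 + a₁ ^ 2 + a₂ ^ 2 + a₃ ^ 2) * (b₀ ^ 2 + b₁ ^ 2 + b₂ ^ 2 + b₃ ^ 2)
          * (c₀ ^ 2 + c₁ ^ 2 + c₂ ^ 2 + c₃ ^ 2) := by
        gcongr
        exact commQuaternion_mul_normSq_le ..
      _ ≤ 2 * n₁ * n₂ * n₃ := by gcongr
      _ ≤ 2 ^ 2 * (n₁ * n₂ * n₃ : ℝ) := by
        have : (0 : ℝ) ≤ n₁ * n₂ * n₃ := by positivity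
        linarith
  have hle := Real.le_sqrt_of_sq_le key
  rw [Real.sqrt_mul (by norm_num), Real.sqrt_sq (by norm_num)] at hle
  linear_combination hle
end
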